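/- Let M be a compact metric space equipped with a Borel probability measure m (the normalized Lebesgue measure), let f : M → M be Borel measurable, and let {K_i}_{i≥1} be a decreasing chain of nonempty compact f-invariant sets, each with basin of statistical attraction of m-measure at least α > 0. Then K := ⋂_i K_i is a nonempty compact f-invariant set whose basin of statistical attraction B(K) satisfies m(B(K)) ≥ α. -/

import Mathlib

open MeasureTheory Filter Metric Set
open scoped Classical ENNReal Topology

/-- Frequency of visits, up to time `n - 1`, of the orbit of `x` to the
`ε`-neighborhood of `K`: `(1/n) · #{0 ≤ j ≤ n−1 : dist(f^j(x), K) < ε}`. -/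
noncomputable def visitFreq {M : Type*} [MetricSpace M] (f : M → M) (K : Set M) (ε : ℝ)
    (x : M) (n : ℕ) : ℝ :=
  (((Finset.range n).filter (fun j => infDist (f^[j] x) K < ε)).card : ℝ) / n

/-- Basin of statistical attraction of `K`. -/
def statBasin {M : Type*} [MetricSpace M] (f : M → M) (K : Set M) : Set M :=
  {x | ∀ ε > 0, Tendsto (fun n => visitFreq f K ε x n) atTop (𝓝 1)}

/-- The auxiliary basin `B_ε(K) = {x : liminf_n (1/n)·#{j < n : dist(f^j(x),K) < ε} > 1 − ε}`. -/
def statBasinEps {M : Type*} [MetricSpace M] (f : M → M) (K : Set M) (ε : ℝ) : Set M :=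
  {x | 1 - ε < atTop.liminf (fun n => visitFreq f K ε x n)}

theorem visitFreq_le_one' {M : Type*} [MetricSpace M] (f : M → M) (K : Set M) (ε : ℝ)
    (x : M) (n : ℕ) : visitFreq f K ε x n ≤ 1 := by
  unfold visitFreq
  apply div_le_one_of_le₀ _ (Nat.cast_nonneg n)
  have := Finset.card_filter_le (Finset.range n) (fun j => infDist (f^[j] x) K < ε)
  rw [Finset.card_range] at this
  exact_mod_cast this

theorem visitFreq_mono' {M : Type*} [MetricSpace M] (f : M → M) (K L : Set M) (ε δ : ℝ)
    (h : ∀ y, infDist y K < ε → infDist y L < δ)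
    (x : M) (n : ℕ) : visitFreq f K ε x n ≤ visitFreq f L δ x n := by
  unfold visitFreq
  apply div_le_div_of_nonneg_right _ (Nat.cast_nonneg n)
  have := Finset.card_le_card (Finset.monotone_filter_right (Finset.range n)
    (p := fun j => infDist (f^[j] x) K < ε) (q := fun j => infDist (f^[j] x) L < δ)
    (fun j _ hj => h _ hj))
  exact_mod_cast this

theorem tendsto_visit' {M : Type*} [MetricSpace M] (f : M → M) (K L : Set M) (ε δ : ℝ)
    (h : ∀ y, infDist y K < ε → infDist y L < δ)
    (x : M) (ht : Tendsto (fun n => visitFreq f K ε x n) atTop (𝓝 1)) :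
    Tendsto (fun n => visitFreq f L δ x n) atTop (𝓝 1) :=
  tendsto_of_tendsto_of_tendsto_of_le_of_le ht tendsto_const_nhds
    (fun n => visitFreq_mono' f K L ε δ h x n) (fun n => visitFreq_le_one' f L δ x n)

theorem measurable_visitFreq' {M : Type*} [MetricSpace M] [MeasurableSpace M] [BorelSpace M]
    (f : M → M) (hf : Measurable f) (K : Set M) (ε : ℝ) (n : ℕ) :
    Measurable (fun x => visitFreq f K ε x n) := by
  unfold visitFreq
  apply Measurable.div_const
  simp only [Finset.card_filter, Nat.cast_sum]
  refine Finset.measurable_sum _ fun j _ => ?_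
  have hs : MeasurableSet {x | infDist (f^[j] x) K < ε} :=
    measurableSet_lt ((continuous_infDist_pt K).measurable.comp (hf.iterate j)) measurable_const
  have h2 : Measurable (fun k : ℕ => (k : ℝ)) := measurable_of_countable _
  exact h2.comp (Measurable.ite hs measurable_const measurable_const)

theorem measurableSet_statBasin' {M : Type*} [MetricSpace M] [MeasurableSpace M] [BorelSpace M]
    (f : M → M) (hf : Measurable f) (K : Set M) : MeasurableSet (statBasin f K) := by
  have : statBasin f K = ⋂ k : ℕ,
      {x | Tendsto (fun n => visitFreq f K (1 / ((k : ℝ) + 1)) x n) atTop (𝓝 1)} := by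
    ext x
    simp only [statBasin, mem_ofPred_eq, mem_iInter]
    refine ⟨fun h k => h _ (by positivity), fun h ε hε => ?_⟩
    obtain ⟨k, hk⟩ := exists_nat_one_div_lt hε
    exact tendsto_visit' f K K _ ε (fun y hy => hy.trans hk) x (h k)
  rw [this]
  exact MeasurableSet.iInter fun k =>
    measurableSet_tendsto (𝓝 1) (fun n => measurable_visitFreq' f hf K _ n)

/-- the intersection of a decreasing chain of nonempty compact `f`-invariant
sets, each whose basin of statistical attraction has `m`-measure at least `α > 0`, is a
nonempty compact `f`-invariant set whose basin has `m`-measure at least `α`. -/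
theorem iInter_chain_statBasin_measure {M : Type*} [MetricSpace M] [CompactSpace M]
    [MeasurableSpace M] [BorelSpace M] (m : Measure M) [IsProbabilityMeasure m]
    (f : M → M) (hf : Measurable f) (α : ℝ) (hα : 0 < α)
    (K : ℕ → Set M) (hne : ∀ i, (K i).Nonempty) (hc : ∀ i, IsCompact (K i))
    (hinv : ∀ i, f ⁻¹' (K i) = K i) (hdec : ∀ i, K (i + 1) ⊆ K i)
    (hbasin : ∀ i, ENNReal.ofReal α ≤ m (statBasin f (K i))) :
    (⋂ i, K i).Nonempty ∧ IsCompact (⋂ i, K i) ∧ f ⁻¹' (⋂ i, K i) = ⋂ i, K i ∧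
      ENNReal.ofReal α ≤ m (statBasin f (⋂ i, K i)) := by
  have hanti : Antitone K := antitone_nat_of_succ_le hdec
  have hdir : Directed (· ⊇ ·) K := directed_of_isDirected_le hanti
  have hKne : (⋂ i, K i).Nonempty :=
    IsCompact.nonempty_iInter_of_directed_nonempty_isCompact_isClosed K hdir hne hc
      (fun i => (hc i).isClosed)
  refine ⟨hKne, (isClosed_iInter fun i => (hc i).isClosed).isCompact, ?_, ?_⟩
  · rw [preimage_iInter]
    exact iInter_congr hinv
  have hsub : (⋂ i, statBasin f (K i)) ⊆ statBasin f (⋂ i, K i) := by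
    intro x hx ε hε
    obtain ⟨i, hi⟩ := exists_subset_nhds_of_isCompact hdir hc
      (U := {y | infDist y (⋂ i, K i) < ε / 2}) (by
        intro y hy
        apply (isOpen_lt (continuous_infDist_pt _) continuous_const).mem_nhds
        simp only [mem_ofPred_eq, infDist_zero_of_mem hy]
        positivity)
    refine tendsto_visit' f (K i) _ (ε / 2) ε (fun y hy => ?_) x
      (mem_iInter.1 hx i (ε / 2) (by positivity))
    obtain ⟨z, hz, hyz⟩ := (infDist_lt_iff (hne i)).1 hy
    have h1 : infDist z (⋂ i, K i) < ε / 2 := hi hz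
    have h2 := infDist_le_infDist_add_dist (s := ⋂ i, K i) (x := y) (y := z)
    linarith
  have hB : Antitone fun i => statBasin f (K i) := by
    intro i j hij x hx ε hε
    refine tendsto_visit' f (K j) _ ε ε (fun y hy => ?_) x (hx ε hε)
    exact (infDist_le_infDist_of_subset (hanti hij) (hne j)).trans_lt hy
  have hlim := tendsto_measure_iInter_atTop (μ := m)
    (fun i => (measurableSet_statBasin' f hf (K i)).nullMeasurableSet) hB
    ⟨0, measure_ne_top _ _⟩
  exact (ge_of_tendsto' hlim hbasin).trans (measure_mono hsub)
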